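/- arXiv:2404.14672 — 4 statements merged into one kernel-verified Lean document; each statement's English description precedes it below -/
import Mathlib

section
/- Let R be a commutative noetherian local ring with maximal ideal m, and let M be an m-power torsion R-module. If there is an element r ∈ m such that the kernel of multiplication by r on M (the submodule {x ∈ M | r·x = 0}) is an artinian R-module, then M itself is an artinian R-module. -/
/-!
As in Hilbert's basis theorem, a submodule `N` is controlled by its leading coefficients: the
submodules `r ^ i • N ∩ ker r` of `ker r`, which decrease with `i`. When `M` is `r`-power torsion,
submodules `N ≤ N'` with the same leading coefficients are equal: subtracting from `x ∈ N'` an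
element of `N` with the same leading coefficient lowers the power of `r` that kills `x`. So
submodules of `M` embed strictly monotonically into decreasing sequences of submodules of `ker r`,
and these satisfy the descending chain condition because `ker r` is artinian.
-/

open Filter OrderDual
open scoped Pointwise

section OrderHom

variable {α : Type*} [PartialOrder α] [WellFoundedGT α]

lemma eventually_forall_ge_eq (a : ℕ →o α) : ∀ᶠ n in atTop, ∀ m ≥ n, a n = a m := by
  obtain ⟨n₀, hn₀⟩ := WellFoundedGT.monotone_chain_condition a
  filter_upwards [eventually_ge_atTop n₀] with n hn m hm
  rw [← hn₀ n hn, hn₀ m (hn.trans hm)]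

lemma exists_forall_ge_apply_apply_eq (a : ℕ →o ℕ →o α) :
    ∃ d, ∀ n ≥ d, ∀ i ≥ d, a n i = a d d := by
  let diagonal : ℕ →o α := ⟨fun n ↦ a n n, fun m n h ↦ (a.mono h m).trans ((a n).mono h)⟩
  obtain ⟨d, hd⟩ := WellFoundedGT.monotone_chain_condition diagonal
  refine ⟨d, fun n hn i hi ↦ le_antisymm ?_ ((a.mono hn d).trans ((a n).mono hi))⟩
  calc
    a n i ≤ a (max n i) i := a.mono (le_max_left n i) i
    _ ≤ a (max n i) (max n i) := (a _).mono (le_max_right n i)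
    _ = a d d := (hd _ (hn.trans (le_max_left n i))).symm

instance wellFoundedGT_natOrderHom : WellFoundedGT (ℕ →o α) := by
  refine wellFoundedGT_iff_monotone_chain_condition.mpr fun a ↦ ?_
  obtain ⟨d, hd⟩ := exists_forall_ge_apply_apply_eq a
  have columns_stabilize : ∀ᶠ n in atTop, ∀ i ∈ Set.Iio d, ∀ m ≥ n, a n i = a m i :=
    (Set.finite_Iio d).eventually_all.mpr fun i _ ↦
      eventually_forall_ge_eq ((OrderHom.apply i).comp a)
  obtain ⟨n, hcol, hdn⟩ := (columns_stabilize.and (eventually_ge_atTop d)).exists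
  refine ⟨n, fun m hnm ↦ OrderHom.ext _ _ (funext fun i ↦ ?_)⟩
  rcases lt_or_ge i d with hid | hdi
  · exact hcol i hid m hnm
  · rw [hd n hdn i hdi, hd m (hdn.trans hnm) i hdi]

end OrderHom

section LeadingSubmodules

variable {R M : Type*} [CommRing R] [AddCommGroup M] [Module R M] {r : R}

lemma antitone_pow_smul (r : R) (N : Submodule R M) : Antitone fun i : ℕ ↦ r ^ i • N := by
  refine antitone_nat_of_succ_le fun i ↦ ?_
  rw [pow_succ, mul_smul]
  exact smul_mono_right _ (Submodule.smul_le_self_of_tower r N)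

/-- The submodules `r ^ i • N ∩ ker r` of `ker r`, analogous to the ideals of leading coefficients
in Hilbert's basis theorem. They decrease with `i`, which is encoded by the order dual. -/
def leadingSubmodules (r : R) (N : Submodule R M) :
    ℕ →o (Submodule R (LinearMap.ker (LinearMap.lsmul R M r)))ᵒᵈ where
  toFun i := toDual ((r ^ i • N).submoduleOf _)
  monotone' _ _ hij := Submodule.comap_mono (antitone_pow_smul r N hij)

lemma antitone_leadingSubmodules (r : R) :
    Antitone (leadingSubmodules r : Submodule R M → _) :=
  fun _ _ hN i ↦ Submodule.comap_mono (smul_mono_right (r ^ i) hN)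

lemma exists_mem_pow_smul_eq {N N' : Submodule R M}
    (h : leadingSubmodules r N ≤ leadingSubmodules r N') {i : ℕ} {x : M} (hx : x ∈ N')
    (hxr : r ^ (i + 1) • x = 0) : ∃ y ∈ N, r ^ i • y = r ^ i • x := by
  have hker : r ^ i • x ∈ LinearMap.ker (LinearMap.lsmul R M r) := by
    rwa [LinearMap.mem_ker, LinearMap.lsmul_apply, smul_smul, ← pow_succ']
  have hlead : (⟨r ^ i • x, hker⟩ : LinearMap.ker _) ∈ ofDual (leadingSubmodules r N' i) :=
    Submodule.smul_mem_pointwise_smul x (r ^ i) N' hx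
  exact (Submodule.mem_smul_pointwise_iff_exists _ _ _).mp (h i hlead)

lemma mem_of_leadingSubmodules_le {N N' : Submodule R M} (hN : N ≤ N')
    (h : leadingSubmodules r N ≤ leadingSubmodules r N') {n : ℕ} {x : M} (hx : x ∈ N')
    (hxr : r ^ n • x = 0) : x ∈ N := by
  induction n generalizing x with
  | zero =>
    rw [pow_zero, one_smul] at hxr
    exact hxr ▸ N.zero_mem
  | succ i ih =>
    obtain ⟨y, hy, hyx⟩ := exists_mem_pow_smul_eq h hx hxr
    have hsub : x - y ∈ N :=
      ih (N'.sub_mem hx (hN hy)) (by rw [smul_sub, hyx, sub_self])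
    exact (N.sub_mem_iff_left hy).mp hsub

lemma strictAnti_leadingSubmodules (htors : ∀ x : M, ∃ n : ℕ, r ^ n • x = 0) :
    StrictAnti (leadingSubmodules r : Submodule R M → _) := by
  refine fun N N' hlt ↦ lt_of_le_not_ge (antitone_leadingSubmodules r hlt.le) fun hle ↦
    hlt.not_ge fun x hx ↦ ?_
  obtain ⟨n, hn⟩ := htors x
  exact mem_of_leadingSubmodules_le hlt.le hle hx hn

theorem artinian_of_ker_smul_artinian_general
    [IsArtinian R (LinearMap.ker (LinearMap.lsmul R M r))]
    (htors : ∀ x : M, ∃ n : ℕ, r ^ n • x = 0) : IsArtinian R M :=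
  (strictAnti_leadingSubmodules htors).wellFoundedLT

end LeadingSubmodules

/-- Let `R` be a commutative noetherian local ring with maximal ideal `m`, and let `M` be an
`m`-power torsion `R`-module.  If there is an element `r ∈ m` such that the kernel of
multiplication by `r` on `M` is an artinian `R`-module, then `M` is an artinian `R`-module. -/
theorem artinian_of_ker_smul_artinian
    (R : Type*) [CommRing R] [IsNoetherianRing R] [IsLocalRing R]
    (M : Type*) [AddCommGroup M] [Module R M]
    (htors : ∀ x : M, ∃ n : ℕ, ∀ a ∈ (IsLocalRing.maximalIdeal R) ^ n, a • x = 0)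
    (r : R) (hr : r ∈ IsLocalRing.maximalIdeal R)
    (hker : IsArtinian R (LinearMap.ker (LinearMap.lsmul R M r))) :
    IsArtinian R M :=
  artinian_of_ker_smul_artinian_general (r := r) fun x ↦
    (htors x).imp fun n hn ↦ hn _ (Ideal.pow_mem_pow hr n)
end

section
/- Let R be a commutative noetherian local ring with maximal ideal m and residue field k = R/m, let E be an injective hull of k, and let M be an m-power torsion R-module such that the biduality map δ_M : M → Hom_R(Hom_R(M, E), E) is an isomorphism. Then for every submodule N ⊆ M, the biduality maps δ_N : N → Hom_R(Hom_R(N, E), E) and δ_{M/N} : M/N → Hom_R(Hom_R(M/N, E), E) are also isomorphisms. -/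
/-!
The functor `Hom(-, E)` is exact because `E` is injective, and the biduality map is natural, so a
short exact sequence `0 → N → M → P → 0` maps to the short exact sequence of its double duals.
Every nonzero cyclic module surjects onto a simple module, which embeds in `E`; extending that map
shows that all biduality maps are injective. The four lemma then gives surjectivity for `N`, and
after that the five lemma gives bijectivity for `P`.

`Module.Injective R E` only provides extensions along maps of modules in the universe of `E`,
whereas `R` and `M` may live in other universes. The argument therefore uses Baer's criterion, which
has no such restriction. To pass from injectivity to Baer's criterion, `R` must be small relative to
the universe of `E`: its residue field is, because it embeds in `E`, hence so is each `R ⧸ 𝔪 ^ n`,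
and `R` embeds in their product by Krull's intersection theorem.
-/

universe u v

section Biduality

variable {R : Type*} [CommRing R] {E : Type*} [AddCommGroup E] [Module R E]
variable {N M P : Type*} [AddCommGroup N] [Module R N] [AddCommGroup M] [Module R M]
  [AddCommGroup P] [Module R P]

variable (R E M) in
/-- The biduality map `δ_M : M → Hom(Hom(M, E), E)`, sending `x` to evaluation at `x`. -/
def biduality : M →ₗ[R] (M →ₗ[R] E) →ₗ[R] E :=
  LinearMap.id.flip

variable (E) in
/-- The map `Hom(Hom(M, E), E) → Hom(Hom(P, E), E)` induced by `f : M → P`, i.e. the action on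
morphisms of the double dual with respect to `E`. -/
def bidualMap (f : M →ₗ[R] P) : ((M →ₗ[R] E) →ₗ[R] E) →ₗ[R] (P →ₗ[R] E) →ₗ[R] E :=
  LinearMap.lcomp R E (LinearMap.lcomp R E f)

theorem bidualMap_comp_biduality (f : M →ₗ[R] P) :
    bidualMap E f ∘ₗ biduality R E M = biduality R E P ∘ₗ f :=
  rfl

theorem lcomp_surjective_of_injective (hE : Module.Baer R E) {f : N →ₗ[R] M}
    (hf : Function.Injective f) : Function.Surjective (LinearMap.lcomp R E f) :=
  hE.extension_property f hf

theorem bidualMap_injective (hE : Module.Baer R E) {f : N →ₗ[R] M} (hf : Function.Injective f) :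
    Function.Injective (bidualMap E f) :=
  LinearMap.lcomp_injective_of_surjective _ (lcomp_surjective_of_injective hE hf)

theorem bidualMap_surjective (hE : Module.Baer R E) {g : M →ₗ[R] P}
    (hg : Function.Surjective g) : Function.Surjective (bidualMap E g) :=
  lcomp_surjective_of_injective hE (LinearMap.lcomp_injective_of_surjective g hg)

theorem bidualMap_exact (hE : Module.Baer R E) {f : N →ₗ[R] M} {g : M →ₗ[R] P}
    (hf : Function.Injective f) (hfg : Function.Exact f g) (hg : Function.Surjective g) :
    Function.Exact (bidualMap E f) (bidualMap E g) :=
  LinearMap.exact_lcomp_of_exact_of_surjective E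
    (LinearMap.exact_lcomp_of_exact_of_surjective E hfg hg) (lcomp_surjective_of_injective hE hf)

theorem biduality_bijective_left_of_exact (hE : Module.Baer R E) {f : N →ₗ[R] M} {g : M →ₗ[R] P}
    (hf : Function.Injective f) (hfg : Function.Exact f g) (hg : Function.Surjective g)
    (hM : Function.Bijective (biduality R E M)) (hP : Function.Injective (biduality R E P)) :
    Function.Bijective (biduality R E N) :=
  LinearMap.bijective_of_bijective_of_injective_of_left_exact f g (bidualMap E f) (bidualMap E g)
    _ _ _ (bidualMap_comp_biduality f) (bidualMap_comp_biduality g) hfg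
    (bidualMap_exact hE hf hfg hg) hM hP hf (bidualMap_injective hE hf)

theorem biduality_bijective_right_of_exact (hE : Module.Baer R E) {f : N →ₗ[R] M} {g : M →ₗ[R] P}
    (hf : Function.Injective f) (hfg : Function.Exact f g) (hg : Function.Surjective g)
    (hN : Function.Surjective (biduality R E N)) (hM : Function.Bijective (biduality R E M)) :
    Function.Bijective (biduality R E P) :=
  LinearMap.bijective_of_surjective_of_bijective_of_right_exact f g (bidualMap E f) (bidualMap E g)
    _ _ _ (bidualMap_comp_biduality f) (bidualMap_comp_biduality g) hfg
    (bidualMap_exact hE hf hfg hg) hN hM hg (bidualMap_surjective hE hg)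

end Biduality

section Cogenerator

variable {R : Type*} [CommRing R] {E : Type*} [AddCommGroup E] [Module R E]
variable {M : Type*} [AddCommGroup M] [Module R M]

variable (R E) in
/-- Every simple `R`-module embeds in `E`. For injective `E` this says that `E` is a cogenerator.
Simple modules are represented as `R ⧸ 𝔪`, so that no universe of modules has to be chosen. -/
def ContainsSimples : Prop :=
  ∀ (𝔪 : Ideal R) [𝔪.IsMaximal], ∃ f : (R ⧸ 𝔪) →ₗ[R] E, Function.Injective f

theorem ContainsSimples.exists_span_singleton_apply_ne_zero (hS : ContainsSimples R E) {x : M}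
    (hx : x ≠ 0) :
    ∃ g : Submodule.span R {x} →ₗ[R] E, g ⟨x, Submodule.mem_span_singleton_self x⟩ ≠ 0 := by
  have annihilator_ne_top : Ideal.torsionOf R M x ≠ ⊤ := by
    rwa [Ne, Ideal.torsionOf_eq_top_iff]
  obtain ⟨𝔪, _, le_𝔪⟩ := Ideal.exists_le_maximal _ annihilator_ne_top
  obtain ⟨f, hf⟩ := hS 𝔪
  let e := Ideal.quotTorsionOfEquivSpanSingleton R M x
  have e_one : e (Submodule.Quotient.mk 1) = ⟨x, Submodule.mem_span_singleton_self x⟩ :=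
    (Ideal.quotTorsionOfEquivSpanSingleton_apply_mk x 1).trans (Subtype.ext (one_smul R x))
  refine ⟨f ∘ₗ Submodule.factor le_𝔪 ∘ₗ e.symm.toLinearMap, ?_⟩
  rw [← e_one]
  simp [map_eq_zero_iff f hf]

theorem ContainsSimples.exists_apply_ne_zero (hS : ContainsSimples R E) (hE : Module.Baer R E)
    {x : M} (hx : x ≠ 0) : ∃ f : M →ₗ[R] E, f x ≠ 0 := by
  obtain ⟨g, hg⟩ := hS.exists_span_singleton_apply_ne_zero hx
  obtain ⟨f, rfl⟩ := hE.extension_property _ (Submodule.injective_subtype _) g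
  exact ⟨f, hg⟩

theorem ContainsSimples.biduality_injective (hS : ContainsSimples R E) (hE : Module.Baer R E) :
    Function.Injective (biduality R E M) := by
  refine (injective_iff_map_eq_zero _).mpr fun x hx ↦ ?_
  by_contra x_ne_zero
  obtain ⟨f, hf⟩ := hS.exists_apply_ne_zero hE x_ne_zero
  exact hf (LinearMap.congr_fun hx f)

theorem containsSimples_of_injective_residueField [IsLocalRing R]
    (ι : IsLocalRing.ResidueField R →ₗ[R] E) (hι : Function.Injective ι) :
    ContainsSimples R E := by
  intro 𝔪 h𝔪
  obtain rfl := IsLocalRing.eq_maximalIdeal h𝔪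
  exact ⟨ι, hι⟩

end Cogenerator

section Small

theorem small_of_exact {A B C F : Type*} [AddGroup B] [AddGroup C] [FunLike F B C]
    [AddMonoidHomClass F B C] {f : A → B} {g : F} (hfg : Function.Exact f g) [Small.{v} A]
    [Small.{v} C] : Small.{v} B := by
  refine small_of_surjective (f := fun p : C × A ↦ Function.invFun g p.1 + f p.2) fun b ↦ ?_
  have lift_eq : g (Function.invFun g (g b)) = g b := Function.invFun_eq ⟨b, rfl⟩
  obtain ⟨a, ha⟩ := (hfg (-Function.invFun g (g b) + b)).mp (by simp [lift_eq])
  exact ⟨(g b, a), by simp [ha]⟩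

variable {R : Type u} [CommRing R] {M : Type*} [AddCommGroup M] [Module R M] (I : Ideal R)

theorem small_quotient_smul_top [Small.{v} (R ⧸ I)] [Module.Finite R M] :
    Small.{v} (M ⧸ I • (⊤ : Submodule R M)) :=
  have : Module.Finite (R ⧸ I) (M ⧸ I • (⊤ : Submodule R M)) :=
    Module.Finite.of_restrictScalars_finite R _ _
  Module.Finite.small (R ⧸ I) _

theorem small_quotient_smul {N : Submodule R M} (hN : N.FG) [Small.{v} (R ⧸ I)]
    [Small.{v} (M ⧸ N)] : Small.{v} (M ⧸ I • N) := by
  have : Module.Finite R N := .of_fg hN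
  have := small_quotient_smul_top.{u, v} (M := N) I
  have smul_top_le : I • (⊤ : Submodule R N) ≤ (I • N).comap N.subtype := by
    rw [← Submodule.map_le_iff_le_comap, Submodule.map_smul'', Submodule.map_subtype_top]
  have quotients_exact : Function.Exact (Submodule.mapQ _ (I • N) N.subtype smul_top_le)
      (Submodule.factor (Submodule.smul_le_right : I • N ≤ N)) := by
    intro y
    obtain ⟨m, rfl⟩ := Submodule.Quotient.mk_surjective _ y
    constructor
    · intro hm
      exact ⟨Submodule.Quotient.mk ⟨m, (Submodule.Quotient.mk_eq_zero N).mp hm⟩, rfl⟩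
    · rintro ⟨z, hz⟩
      obtain ⟨n, rfl⟩ := Submodule.Quotient.mk_surjective _ z
      rw [← hz]
      exact (Submodule.Quotient.mk_eq_zero N).mpr n.2
  exact small_of_exact quotients_exact

variable {I} in
theorem small_quotient_pow (hI : I.FG) [Small.{v} (R ⧸ I)] (n : ℕ) : Small.{v} (R ⧸ I ^ n) := by
  induction n with
  | zero =>
    rw [pow_zero, Ideal.one_eq_top]
    infer_instance
  | succ n _ => exact small_quotient_smul (I ^ n) hI

variable {I} in
theorem small_of_isHausdorff (hI : I.FG) [Small.{v} (R ⧸ I)] [Module.Finite R M]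
    [IsHausdorff I M] : Small.{v} M := by
  have small_quotient (n : ℕ) : Small.{v} (M ⧸ (I ^ n • ⊤ : Submodule R M)) :=
    have := small_quotient_pow.{u, v} hI n
    small_quotient_smul_top (I ^ n)
  refine small_of_injective (β := ∀ n : ℕ, M ⧸ (I ^ n • ⊤ : Submodule R M))
    (f := fun x n ↦ Submodule.Quotient.mk x) fun x y hxy ↦ ?_
  exact (IsHausdorff.eq_iff_smodEq (I := I)).mpr fun n ↦ congrFun hxy n

theorem baer_of_injective_residueField [IsNoetherianRing R] [IsLocalRing R] {E : Type v}
    [AddCommGroup E] [Module R E] [Module.Injective R E]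
    (ι : IsLocalRing.ResidueField R →ₗ[R] E) (hι : Function.Injective ι) : Module.Baer R E :=
  have : Small.{v} (R ⧸ IsLocalRing.maximalIdeal R) := small_of_injective hι
  have : Small.{v} R := small_of_isHausdorff (IsLocalRing.maximalIdeal R).fg_of_isNoetherianRing
  .of_injective inferInstance

end Small

theorem biduality_bijective_of_submodule_and_quotient_general {R : Type*} [CommRing R]
    {E : Type*} [AddCommGroup E] [Module R E] (hE : Module.Baer R E) (hS : ContainsSimples R E)
    {M : Type*} [AddCommGroup M] [Module R M] (hM : Function.Bijective (biduality R E M))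
    (N : Submodule R M) :
    Function.Bijective (biduality R E N) ∧ Function.Bijective (biduality R E (M ⧸ N)) := by
  have hexact : Function.Exact N.subtype N.mkQ := LinearMap.exact_subtype_mkQ N
  have hN : Function.Bijective (biduality R E N) :=
    biduality_bijective_left_of_exact hE N.injective_subtype hexact N.mkQ_surjective hM
      (hS.biduality_injective hE)
  exact ⟨hN, biduality_bijective_right_of_exact hE N.injective_subtype hexact N.mkQ_surjective
    hN.surjective hM⟩

/-- Matlis reflexive torsion modules are closed under submodules and quotients:  if `R` is a
commutative noetherian local ring with maximal ideal `m`, residue field `k`, and `E` an injective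
hull of `k`, and `M` is an `m`-power torsion module whose biduality map
`M → Hom_R(Hom_R(M,E),E)` is an isomorphism, then for every submodule `N ⊆ M` the biduality maps
of `N` and of `M/N` are isomorphisms as well. -/
theorem biduality_bijective_of_submodule_and_quotient
    (R : Type*) [CommRing R] [IsNoetherianRing R] [IsLocalRing R]
    (E : Type*) [AddCommGroup E] [Module R E] [Module.Injective R E]
    (ι : IsLocalRing.ResidueField R →ₗ[R] E) (hι : Function.Injective ι)
    (hess : ∀ N : Submodule R E, N ≠ ⊥ → ∃ x ∈ N, x ≠ 0 ∧ x ∈ LinearMap.range ι)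
    (M : Type*) [AddCommGroup M] [Module R M]
    (htors : ∀ x : M, ∃ n : ℕ, ∀ a ∈ (IsLocalRing.maximalIdeal R) ^ n, a • x = 0)
    (hM : Function.Bijective
      ⇑((LinearMap.id : (M →ₗ[R] E) →ₗ[R] (M →ₗ[R] E)).flip))
    (N : Submodule R M) :
    Function.Bijective
        ⇑((LinearMap.id : (↥N →ₗ[R] E) →ₗ[R] (↥N →ₗ[R] E)).flip) ∧
      Function.Bijective
        ⇑((LinearMap.id : ((M ⧸ N) →ₗ[R] E) →ₗ[R] ((M ⧸ N) →ₗ[R] E)).flip) :=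
  biduality_bijective_of_submodule_and_quotient_general
    (baer_of_injective_residueField ι hι) (containsSimples_of_injective_residueField ι hι) hM N
end

section
/- Let R be a commutative noetherian local ring with maximal ideal m and residue field k = R/m, and let M be an m-power torsion R-module whose socle Soc(M) = {x ∈ M | a·x = 0 for all a ∈ m} is a finite-dimensional k-vector space. Then M is an artinian R-module. -/
/-!
Let `M` be a module on which the scalar `a` acts locally nilpotently. A submodule `N` of `M` is
recorded by the decreasing sequence of submodules `aⁿN ∩ M[a]` of the `a`-torsion `M[a]`: if
`N ≤ N'` have the same sequence, then `N = N'`, since an element of `N'` killed by `aⁿ⁺¹` can be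
corrected by an element of `N` to one killed by `aⁿ`. Monotone sequences in an order with the
chain condition again satisfy the chain condition, so `M` is artinian as soon as `M[a]` is.
Adding the generators of an ideal `I` one at a time, `M` is artinian as soon as `M[I]` is.
-/

instance wellFoundedGT_nat_orderHom {α : Type*} [PartialOrder α] [WellFoundedGT α] :
    WellFoundedGT (ℕ →o α) := by
  rw [wellFoundedGT_iff_monotone_chain_condition]
  intro f
  obtain ⟨d, diag_stable⟩ := WellFoundedGT.monotone_chain_condition
    (⟨fun j ↦ f j j, fun _ j hij ↦ ((f _).monotone hij).trans (f.monotone hij j)⟩ : ℕ →o α)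
  have eq_diag {j n : ℕ} (hj : d ≤ j) (hn : d ≤ n) : f j n = f d d := by
    refine le_antisymm ?_ ((f.monotone hj d).trans ((f j).monotone hn))
    calc
      f j n ≤ f (max j n) (max j n) :=
        (f.monotone (le_max_left j n) n).trans ((f _).monotone (le_max_right j n))
      _ = f d d := (diag_stable _ (hj.trans (le_max_left j n))).symm
  have : WellFoundedGT (Fin d → α) := ⟨(Pi.wellFoundedLT (α := fun _ : Fin d ↦ αᵒᵈ)).wf⟩
  obtain ⟨c, initial_stable⟩ := WellFoundedGT.monotone_chain_condition
    (⟨fun j (i : Fin d) ↦ f j i, fun _ _ hij i ↦ f.monotone hij i⟩ : ℕ →o (Fin d → α))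
  refine ⟨max d c, fun j hj ↦ OrderHom.ext _ _ (funext fun n ↦ ?_)⟩
  obtain hn | hn := le_or_gt d n
  · rw [eq_diag (le_max_left d c) hn, eq_diag ((le_max_left d c).trans hj) hn]
  · have initial_eq {i : ℕ} (hi : c ≤ i) : f c n = f i n :=
      congrFun (initial_stable i hi) ⟨n, hn⟩
    rw [← initial_eq (le_max_right d c), ← initial_eq ((le_max_right d c).trans hj)]

section Torsion

open Submodule

variable {R M : Type*} [CommRing R] [AddCommGroup M] [Module R M]

/-- The sequence `n ↦ aⁿN ∩ M[a]` attached to a submodule `N` of `M`, which measures `N` by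
submodules of the `a`-torsion `M[a]`. It is decreasing, hence the order dual. -/
def torsionLayers (a : R) (N : Submodule R M) : ℕ →o (Submodule R (torsionBy R M a))ᵒᵈ where
  toFun n := OrderDual.toDual
    ((N.map (LinearMap.lsmul R M (a ^ n))).comap (torsionBy R M a).subtype)
  monotone' := monotone_nat_of_le_succ fun n ↦ by
    rintro y ⟨x, hx, hxy⟩
    refine ⟨a • x, N.smul_mem a hx, ?_⟩
    rw [← hxy, LinearMap.lsmul_apply, LinearMap.lsmul_apply, smul_smul, pow_succ]

theorem mem_torsionLayers {a : R} {N : Submodule R M} {n : ℕ} {y : torsionBy R M a} :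
    y ∈ OrderDual.ofDual (torsionLayers a N n) ↔ ∃ x ∈ N, a ^ n • x = y :=
  Iff.rfl

theorem antitone_torsionLayers (a : R) :
    Antitone (torsionLayers a : Submodule R M → ℕ →o (Submodule R (torsionBy R M a))ᵒᵈ) :=
  fun _ _ hN _ ↦ comap_mono (map_mono hN)

theorem mem_of_pow_smul_eq_zero_of_torsionLayers_le {a : R} {N N' : Submodule R M} (hN : N ≤ N')
    (hlayers : torsionLayers a N ≤ torsionLayers a N') {n : ℕ} {x : M} (hx : x ∈ N')
    (hax : a ^ n • x = 0) : x ∈ N := by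
  induction n generalizing x with
  | zero =>
    rw [pow_zero, one_smul] at hax
    exact hax ▸ N.zero_mem
  | succ n ih =>
    have hmem : a ^ n • x ∈ torsionBy R M a := by
      rw [mem_torsionBy_iff, smul_smul, ← pow_succ', hax]
    obtain ⟨y, hy, hyx⟩ : ∃ y ∈ N, a ^ n • y = a ^ n • x :=
      mem_torsionLayers.1 (hlayers n (mem_torsionLayers (y := ⟨_, hmem⟩).2 ⟨x, hx, rfl⟩))
    have hsub : x - y ∈ N :=
      ih (N'.sub_mem hx (hN hy)) (by rw [smul_sub, hyx, sub_self])
    exact (N.sub_mem_iff_left hy).1 hsub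

theorem strictAnti_torsionLayers {a : R} (ha : ∀ x : M, ∃ n : ℕ, a ^ n • x = 0) :
    StrictAnti (torsionLayers a : Submodule R M → ℕ →o (Submodule R (torsionBy R M a))ᵒᵈ) := by
  intro N N' hN
  refine lt_of_le_not_ge (antitone_torsionLayers a hN.le) fun hlayers ↦ hN.not_ge fun x hx ↦ ?_
  obtain ⟨n, hn⟩ := ha x
  exact mem_of_pow_smul_eq_zero_of_torsionLayers_le hN.le hlayers hx hn

theorem isArtinian_of_isArtinian_torsionBy {a : R} (ha : ∀ x : M, ∃ n : ℕ, a ^ n • x = 0)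
    [IsArtinian R (torsionBy R M a)] : IsArtinian R M :=
  (strictAnti_torsionLayers ha).wellFoundedLT

theorem torsionBySet_submodule (N : Submodule R M) (s : Set R) :
    torsionBySet R N s = (torsionBySet R M s).comap N.subtype := by
  ext x
  simp [mem_torsionBySet_iff, Subtype.ext_iff]

theorem torsionBySet_ideal_sup (I J : Ideal R) :
    torsionBySet R M ((I ⊔ J : Ideal R) : Set R) =
      torsionBySet R M (I : Set R) ⊓ torsionBySet R M (J : Set R) :=
  (torsion_gc R M).u_inf (b₁ := OrderDual.toDual I) (b₂ := OrderDual.toDual J)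

theorem map_subtype_torsionBySet_torsionBySet_ideal (I J : Ideal R) :
    (torsionBySet R (torsionBySet R M (I : Set R)) (J : Set R)).map
      (torsionBySet R M (I : Set R)).subtype =
        torsionBySet R M ((I ⊔ J : Ideal R) : Set R) := by
  rw [torsionBySet_submodule, map_comap_subtype, torsionBySet_ideal_sup]

theorem isArtinian_torsionBySet_of_finite_quotient (I : Ideal R) [IsArtinianRing (R ⧸ I)]
    [Module.Finite (R ⧸ I) (torsionBySet R M (I : Set R))] :
    IsArtinian R (torsionBySet R M (I : Set R)) :=
  isArtinian_of_surjective_algebraMap (R := R ⧸ I) Ideal.Quotient.mk_surjective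

theorem artinian_of_finite_socle_general {I : Ideal R} (hI : I.FG)
    (htors : ∀ a ∈ I, ∀ x : M, ∃ n : ℕ, a ^ n • x = 0)
    [hart : IsArtinian R (torsionBySet R M (I : Set R))] : IsArtinian R M := by
  induction I, hI using Submodule.fg_induction generalizing M with
  | singleton a =>
    rw [torsionBySet_span_singleton_eq] at hart
    exact isArtinian_of_isArtinian_torsionBy (htors a (mem_span_singleton_self a))
  | sup I J _ _ ihI ihJ =>
    rw [← map_subtype_torsionBySet_torsionBySet_ideal] at hart
    have : IsArtinian R (torsionBySet R (torsionBySet R M (I : Set R)) (J : Set R)) :=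
      isArtinian_of_linearEquiv (equivSubtypeMap _ _).symm
    have : IsArtinian R (torsionBySet R M (I : Set R)) :=
      ihJ fun a ha x ↦ (htors a (mem_sup_right ha) x).imp fun _ hn ↦ Subtype.ext hn
    exact ihI fun a ha ↦ htors a (mem_sup_left ha)

end Torsion

/-- Let `R` be a commutative noetherian local ring with maximal ideal `m` and residue field
`k = R/m`, and let `M` be an `m`-power torsion `R`-module whose socle
`Soc(M) = {x ∈ M | a • x = 0 for all a ∈ m}` (here realised as `Submodule.torsionBySet R M m`,
which is canonically a `k`-vector space) is finite-dimensional over `k`.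
Then `M` is an artinian `R`-module. -/
theorem artinian_of_finite_socle
    (R : Type*) [CommRing R] [IsNoetherianRing R] [IsLocalRing R]
    (M : Type*) [AddCommGroup M] [Module R M]
    (htors : ∀ x : M, ∃ n : ℕ, ∀ a ∈ (IsLocalRing.maximalIdeal R) ^ n, a • x = 0)
    (hsoc : Module.Finite (R ⧸ IsLocalRing.maximalIdeal R)
      ↥(Submodule.torsionBySet R M (IsLocalRing.maximalIdeal R : Set R))) :
    IsArtinian R M := by
  let _ := Ideal.Quotient.field (IsLocalRing.maximalIdeal R)
  have := isArtinian_torsionBySet_of_finite_quotient (M := M) (IsLocalRing.maximalIdeal R)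
  exact artinian_of_finite_socle_general (IsLocalRing.maximalIdeal R).fg_of_isNoetherianRing
    fun a ha x ↦ (htors x).imp fun n hn ↦ hn _ (Ideal.pow_mem_pow ha n)
end

section
/- Let K be a field of characteristic p > 0 and set A = K[t]/(t^p), with K regarded as the A-module A/(t). An A-module N is isomorphic to a direct sum D ⊕ F, where D is a finite-dimensional K-vector space and F is a free A-module, if and only if Ext^1_A(K, N) is a finite-dimensional K-vector space. -/
universe u

/-- The truncated polynomial algebra `A = K[t]/(t^p)`. -/
noncomputable abbrev TruncatedPolynomialAlgebra (K : Type u) [Field K] (p : ℕ) : Type u :=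
  Polynomial K ⧸ Ideal.span {(Polynomial.X : Polynomial K) ^ p}

/-!
Let `A = K[t]/(t^n)` with `n = q + 1`. The complex `⋯ → A → A → A → K` whose differentials are
alternately multiplication by `t^q` and by `t` is a free resolution of `K`, so `Ext¹_A(K, N)` is the
quotient of the kernel of `t^q` on `N` by the image of `t`. A free module contributes nothing to
this quotient.

Every `A`-module splits as `D ⊕ F` with `F` free and `t^q D = 0`. Let `S = t^q N`, choose a
`K`-linear section `s : S → N` of `t^q` and a `K`-linear retraction `f : N → S`. They induce
`A`-linear maps `A ⊗ S → N` and `N → A ⊗ S`, whose composite on `A ⊗ S` is congruent to the identity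
modulo `t` and is therefore invertible; `F` is the image of the first and `D` the kernel of the
second. Finiteness of `Ext¹_A(K, N)` then makes `D / tD` finite-dimensional, and hence `D` by
Nakayama.
-/

open CategoryTheory TensorProduct

section LinearAlgebra

theorem finite_quotient_submoduleOf_iff {K V : Type*} [DivisionRing K] [AddCommGroup V] [Module K V]
    (P R : Submodule K V) :
    Module.Finite K (P ⧸ R.submoduleOf P) ↔ ∃ U : Submodule K V, U.FG ∧ P ≤ U ⊔ R := by
  constructor
  · intro _
    obtain ⟨U, hU⟩ := (R.submoduleOf P).exists_isCompl
    have : Module.Finite K U := .equiv (Submodule.quotientEquivOfIsCompl _ _ hU)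
    refine ⟨U.map P.subtype, (Module.Finite.iff_fg.1 this).map _, ?_⟩
    calc P = (⊤ : Submodule K P).map P.subtype := P.map_subtype_top.symm
      _ = U.map P.subtype ⊔ (R.submoduleOf P).map P.subtype := by
        rw [← Submodule.map_sup, sup_comm, hU.sup_eq_top]
      _ ≤ U.map P.subtype ⊔ R := sup_le_sup_left (Submodule.map_comap_le _ _) _
  · rintro ⟨U, hU, hPU⟩
    have range_le : LinearMap.range (R.mkQ ∘ₗ P.subtype) ≤ U.map R.mkQ := by
      rw [LinearMap.range_comp, P.range_subtype]
      simpa [Submodule.map_sup] using Submodule.map_mono (f := R.mkQ) hPU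
    have ker_eq : LinearMap.ker (R.mkQ ∘ₗ P.subtype) = R.submoduleOf P := by
      rw [LinearMap.ker_comp, R.ker_mkQ, Submodule.submoduleOf]
    have : Module.Finite K (U.map R.mkQ) := Module.Finite.iff_fg.2 (hU.map _)
    have := Submodule.finiteDimensional_of_le range_le
    exact .equiv (Submodule.quotEquivOfEq _ _ ker_eq.symm ≪≫ₗ
      (R.mkQ ∘ₗ P.subtype).quotKerEquivRange).symm

theorem isCompl_ker_range_of_bijective_comp {A M N : Type*} [Ring A] [AddCommGroup M] [Module A M]
    [AddCommGroup N] [Module A N] {f : N →ₗ[A] M} {g : M →ₗ[A] N}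
    (h : Function.Bijective (f ∘ₗ g)) : IsCompl (LinearMap.ker f) (LinearMap.range g) := by
  refine ⟨Submodule.disjoint_def.2 ?_, codisjoint_iff.2 (eq_top_iff.2 fun n _ ↦ ?_)⟩
  · rintro _ hx ⟨y, rfl⟩
    rw [(injective_iff_map_eq_zero (f ∘ₗ g)).1 h.1 y hx, map_zero]
  · obtain ⟨y, hy : f (g y) = f n⟩ := h.2 (f n)
    rw [← sub_add_cancel n (g y)]
    exact Submodule.add_mem_sup (by simp [hy]) ⟨y, rfl⟩

theorem eq_top_of_sup_range_lsmul_eq_top {A M : Type*} [CommRing A] [AddCommGroup M] [Module A M]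
    {t : A} (ht : IsNilpotent t) {L : Submodule A M}
    (hL : L ⊔ LinearMap.range (LinearMap.lsmul A M t) = ⊤) : L = ⊤ := by
  obtain ⟨k, hk⟩ := ht
  have sup_pow_eq_top (i : ℕ) : L ⊔ LinearMap.range (LinearMap.lsmul A M (t ^ i)) = ⊤ := by
    induction i with
    | zero => simp [eq_top_iff, SetLike.le_def]
    | succ i ih =>
      refine eq_top_iff.2 fun x _ ↦ ?_
      obtain ⟨y, hy, _, ⟨z, rfl⟩, rfl⟩ := Submodule.mem_sup.1 (ih ▸ Submodule.mem_top : x ∈ _)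
      obtain ⟨y', hy', _, ⟨w, rfl⟩, rfl⟩ := Submodule.mem_sup.1 (hL ▸ Submodule.mem_top : z ∈ _)
      refine Submodule.mem_sup.2 ⟨y + t ^ i • y', L.add_mem hy (L.smul_mem _ hy'), _, ⟨w, rfl⟩, ?_⟩
      simp only [LinearMap.lsmul_apply, smul_add, smul_smul, pow_succ, add_assoc]
  simpa [hk] using sup_pow_eq_top k

theorem map_smul_of_adjoin_eq_top {K A M N : Type*} [CommSemiring K] [Semiring A] [Algebra K A]
    [AddCommMonoid M] [Module K M] [Module A M] [IsScalarTower K A M]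
    [AddCommMonoid N] [Module K N] [Module A N] [IsScalarTower K A N]
    {s : Set A} (hs : Algebra.adjoin K s = ⊤) (f : M →ₗ[K] N)
    (hf : ∀ t ∈ s, ∀ x, f (t • x) = t • f x) (a : A) (x : M) : f (a • x) = a • f x := by
  have ha : a ∈ Algebra.adjoin K s := hs ▸ Algebra.mem_top
  induction ha using Algebra.adjoin_induction generalizing x with
  | mem t ht => exact hf t ht x
  | algebraMap r => simp only [algebraMap_smul, map_smul]
  | add a b _ _ iha ihb => simp only [add_smul, map_add, iha, ihb]
  | mul a b _ _ iha ihb => simp only [mul_smul, iha, ihb]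

theorem exact_lsmul_of_flat {A : Type*} [CommRing A] {a b : A}
    (h : Function.Exact (LinearMap.lsmul A A a) (LinearMap.lsmul A A b))
    (F : Type*) [AddCommGroup F] [Module A F] [Module.Flat A F] :
    Function.Exact (LinearMap.lsmul A F a) (LinearMap.lsmul A F b) := by
  have lid_comp (c : A) : LinearMap.lsmul A F c ∘ₗ TensorProduct.lid A F =
      TensorProduct.lid A F ∘ₗ (LinearMap.lsmul A A c).rTensor F := by
    ext; simp
  exact .of_ladder_linearEquiv_of_exact (lid_comp a) (lid_comp b) (Module.Flat.rTensor_exact F h)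

theorem lsmul_comp_lsmul_eq_zero_of_exact {K A N : Type*} [CommRing K] [CommRing A] [Algebra K A]
    [AddCommGroup N] [Module A N] [Module K N] [IsScalarTower K A N] {a b : A}
    (h : Function.Exact (LinearMap.lsmul A A a) (LinearMap.lsmul A A b)) :
    (Algebra.lsmul K K N b : N →ₗ[K] N) ∘ₗ Algebra.lsmul K K N a = 0 := by
  have mul_eq_zero : b * a = 0 := by simpa using h.apply_apply_eq_zero 1
  ext x
  simp [smul_smul, mul_eq_zero]

end LinearAlgebra

section CofreeLift

variable {K A N S : Type*} [CommRing K] [CommRing A] [Algebra K A]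
  [AddCommGroup N] [Module A N] [Module K N] [IsScalarTower K A N]
  [AddCommGroup S] [Module K S]

/-- The map `x ↦ ∑_{i < n} t^(n-1-i) ⊗ f (t^i x)`, written as a Horner recursion. When `A` is
generated by `t` and `t^n = 0`, it is the `A`-linear map induced by `f` that exhibits `A ⊗ S` as
relatively cofree over `K`. -/
noncomputable def cofreeLift (t : A) (f : N →ₗ[K] S) : ℕ → N →ₗ[K] A ⊗[K] S
  | 0 => 0
  | n + 1 => t • cofreeLift t f n + TensorProduct.mk K A S 1 ∘ₗ f ∘ₗ Algebra.lsmul K K N (t ^ n)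

theorem cofreeLift_succ_apply (t : A) (f : N →ₗ[K] S) (n : ℕ) (x : N) :
    cofreeLift t f (n + 1) x = t • cofreeLift t f n x + 1 ⊗ₜ f (t ^ n • x) :=
  rfl

theorem cofreeLift_succ_apply' (t : A) (f : N →ₗ[K] S) (n : ℕ) (x : N) :
    cofreeLift t f (n + 1) x = cofreeLift t f n (t • x) + (t ^ n) ⊗ₜ f x := by
  induction n with
  | zero => simp [cofreeLift]
  | succ n ih =>
    rw [cofreeLift_succ_apply, ih, cofreeLift_succ_apply, smul_add, smul_tmul', smul_eq_mul,
      smul_smul, ← pow_succ, ← pow_succ']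
    abel

theorem cofreeLift_smul {t : A} {n : ℕ} (ht : t ^ n = 0) (f : N →ₗ[K] S) (x : N) :
    cofreeLift t f n (t • x) = t • cofreeLift t f n x := by
  simpa [cofreeLift_succ_apply, ht] using (cofreeLift_succ_apply' t f n x).symm

theorem pow_smul_cofreeLift_succ {t : A} {q : ℕ} (ht : t ^ (q + 1) = 0) (f : N →ₗ[K] S) (x : N) :
    t ^ q • cofreeLift t f (q + 1) x = (t ^ q) ⊗ₜ f (t ^ q • x) := by
  rw [cofreeLift_succ_apply, smul_add, smul_smul, ← pow_succ, ht, zero_smul, zero_add, smul_tmul',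
    smul_eq_mul, mul_one]

/-- `cofreeLift t f n` as an `A`-linear map, when `t` generates `A` and `t^n = 0`. -/
noncomputable def cofreeLiftOfAdjoin {t : A} {n : ℕ} (hgen : Algebra.adjoin K {t} = ⊤)
    (ht : t ^ n = 0) (f : N →ₗ[K] S) : N →ₗ[A] A ⊗[K] S where
  __ := cofreeLift t f n
  map_smul' := map_smul_of_adjoin_eq_top hgen _ (by simpa using cofreeLift_smul ht f)

theorem cofreeLiftOfAdjoin_apply {t : A} {n : ℕ} (hgen : Algebra.adjoin K {t} = ⊤)
    (ht : t ^ n = 0) (f : N →ₗ[K] S) (x : N) :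
    cofreeLiftOfAdjoin hgen ht f x = cofreeLift t f n x :=
  rfl

theorem bijective_cofreeLiftOfAdjoin_comp_liftBaseChange {t : A} {q : ℕ}
    (hgen : Algebra.adjoin K {t} = ⊤) (ht : t ^ (q + 1) = 0) {f : N →ₗ[K] S} {s : S →ₗ[K] N}
    (hfs : ∀ x, f (t ^ q • s x) = x) :
    Function.Bijective (cofreeLiftOfAdjoin hgen ht f ∘ₗ s.liftBaseChange A) := by
  let τ : Module.End A (A ⊗[K] S) := (cofreeLift t f q ∘ₗ s).liftBaseChange A
  have comp_eq : cofreeLiftOfAdjoin hgen ht f ∘ₗ s.liftBaseChange A = 1 + t • τ := by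
    ext x
    simp [τ, cofreeLiftOfAdjoin_apply, cofreeLift_succ_apply, hfs, add_comm]
  have isNilpotent_smul : IsNilpotent (t • τ) := ⟨q + 1, by rw [smul_pow, ht, zero_smul]⟩
  have isUnit_one_add : IsUnit (1 + t • τ : Module.End A (A ⊗[K] S)) :=
    IsNilpotent.isUnit_one_add (R := Module.End A (A ⊗[K] S)) (r := t • τ) isNilpotent_smul
  rw [comp_eq]
  exact (Module.End.isUnit_iff _).1 isUnit_one_add

end CofreeLift

section Decomposition

variable {K A N : Type*} [Field K] [CommRing A] [Algebra K A]
  [AddCommGroup N] [Module A N] [Module K N] [IsScalarTower K A N]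

theorem exists_isCompl_free {t : A} {q : ℕ} (hgen : Algebra.adjoin K {t} = ⊤)
    (ht : t ^ (q + 1) = 0) : ∃ D F : Submodule A N,
      IsCompl D F ∧ (∀ x ∈ D, t ^ q • x = 0) ∧ Module.Free A F := by
  let T : N →ₗ[K] N := Algebra.lsmul K K N (t ^ q)
  obtain ⟨s, hs⟩ := T.rangeRestrict.exists_rightInverse_of_surjective T.range_rangeRestrict
  obtain ⟨f, hf⟩ := (LinearMap.range T).subtype.exists_leftInverse_of_injective
    (LinearMap.range T).ker_subtype
  have pow_smul_s (y) : t ^ q • s y = y := congr(Subtype.val ($hs y))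
  have f_coe (y : LinearMap.range T) : f y = y := congr($hf y)
  let ψ := cofreeLiftOfAdjoin hgen ht f
  let σ := s.liftBaseChange A
  have bijective_comp : Function.Bijective (ψ ∘ₗ σ) :=
    bijective_cofreeLiftOfAdjoin_comp_liftBaseChange hgen ht fun y ↦ by rw [pow_smul_s, f_coe]
  have injective_σ : Function.Injective σ := .of_comp (f := ψ) bijective_comp.1
  refine ⟨LinearMap.ker ψ, LinearMap.range σ, isCompl_ker_range_of_bijective_comp bijective_comp,
    fun x hx ↦ ?_, .of_equiv (LinearEquiv.ofInjective σ injective_σ)⟩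
  have f_pow_smul : f (t ^ q • x) = ⟨t ^ q • x, x, rfl⟩ := f_coe ⟨t ^ q • x, x, rfl⟩
  calc t ^ q • x = σ ((t ^ q) ⊗ₜ f (t ^ q • x)) := by simp [σ, pow_smul_s, f_pow_smul]
    _ = σ (t ^ q • ψ x) := by rw [← pow_smul_cofreeLift_succ ht, ← cofreeLiftOfAdjoin_apply hgen ht]
    _ = 0 := by rw [LinearMap.mem_ker.1 hx, smul_zero, map_zero]

/-- The homology `ker b / (im a ∩ ker b)` at the middle term of the sequence `N → N → N` of
multiplication by `a` followed by multiplication by `b`. -/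
abbrev SMulHomology (K N : Type*) {A : Type*} [CommRing K] [CommRing A] [Algebra K A]
    [AddCommGroup N] [Module A N] [Module K N] [IsScalarTower K A N] (a b : A) : Type _ :=
  LinearMap.ker (Algebra.lsmul K K N b) ⧸
    (LinearMap.range (Algebra.lsmul K K N a)).submoduleOf (LinearMap.ker (Algebra.lsmul K K N b))

theorem finite_smulHomology_of_isCompl {D F : Submodule A N} (hDF : IsCompl D F)
    [Module.Finite K D] {a b : A}
    (hF : Function.Exact (LinearMap.lsmul A F a) (LinearMap.lsmul A F b)) :
    Module.Finite K (SMulHomology K N a b) := by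
  refine (finite_quotient_submoduleOf_iff _ _).2
    ⟨D.restrictScalars K, Module.Finite.iff_fg.1 ‹Module.Finite K D›, fun x hx ↦ ?_⟩
  have b_smul_proj : b • F.projectionOnto D hDF.symm x = 0 := by
    rw [← map_smul, show b • x = 0 from hx, map_zero]
  obtain ⟨y, hy⟩ := (hF _).1 b_smul_proj
  have proj_mem : (F.projection D hDF.symm x) ∈ LinearMap.range (Algebra.lsmul K K N a) :=
    ⟨y, congr(Subtype.val $hy)⟩
  rw [← Submodule.projection_add_projection_eq_self hDF x]
  exact Submodule.add_mem_sup (Submodule.projection_apply_mem hDF x) proj_mem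

theorem finite_of_isCompl_of_finite_smulHomology [Module.Finite K A] {D F : Submodule A N}
    (hDF : IsCompl D F) {t b : A} (ht : IsNilpotent t) (hD : ∀ x ∈ D, b • x = 0)
    (h : Module.Finite K (SMulHomology K N t b)) : Module.Finite K D := by
  obtain ⟨U, ⟨G, rfl⟩, hU⟩ := (finite_quotient_submoduleOf_iff _ _).1 h
  let pr := D.projectionOnto F hDF
  let L : Submodule A D := (Submodule.span A G).map pr
  have pr_mem_L (u) (hu : u ∈ Submodule.span K (G : Set N)) : pr u ∈ L :=
    Submodule.mem_map_of_mem (Submodule.span_le_restrictScalars K A _ hu)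
  have sup_eq_top : L ⊔ LinearMap.range (LinearMap.lsmul A D t) = ⊤ := by
    refine eq_top_iff.2 fun d _ ↦ ?_
    obtain ⟨u, hu, _, ⟨y, rfl⟩, hd⟩ := Submodule.mem_sup.1 (hU (hD d d.2))
    have pr_add : pr u + t • pr y = d := by
      rw [← map_smul, ← map_add]
      exact (congrArg pr hd).trans (Submodule.projectionOnto_apply_left hDF d)
    rw [← pr_add]
    exact Submodule.add_mem_sup (pr_mem_L u hu) ⟨pr y, rfl⟩
  have L_eq_top : L = ⊤ := eq_top_of_sup_range_lsmul_eq_top ht sup_eq_top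
  have : Module.Finite A D := ⟨L_eq_top ▸ (Submodule.fg_span G.finite_toSet).map pr⟩
  exact .trans A D

theorem exists_isCompl_finite_free_iff_finite_smulHomology {t : A} {q : ℕ}
    (hgen : Algebra.adjoin K {t} = ⊤) (ht : t ^ (q + 1) = 0)
    (exact_t_pow : Function.Exact (LinearMap.lsmul A A t) (LinearMap.lsmul A A (t ^ q))) :
    (∃ D F : Submodule A N, IsCompl D F ∧ Module.Finite K D ∧ Module.Free A F) ↔
      Module.Finite K (SMulHomology K N t (t ^ q)) := by
  constructor
  · rintro ⟨D, F, hDF, _, _⟩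
    exact finite_smulHomology_of_isCompl hDF (exact_lsmul_of_flat exact_t_pow F)
  · intro finite_homology
    have isIntegral_t : IsIntegral K t := .of_pow q.succ_pos (ht ▸ isIntegral_zero)
    have : Module.Finite K A := ⟨by simpa [hgen] using isIntegral_t.fg_adjoin_singleton⟩
    obtain ⟨D, F, hDF, pow_smul_D, free_F⟩ := exists_isCompl_free (N := N) hgen ht
    exact ⟨D, F, hDF, finite_of_isCompl_of_finite_smulHomology hDF ⟨_, ht⟩ pow_smul_D
      finite_homology, free_F⟩

end Decomposition

section PeriodicResolution

variable {C : Type*} [Category* C] [Abelian C] {P X : C} {φ ψ : P ⟶ P} {π : P ⟶ X}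
  {hφψ : φ ≫ ψ = 0} {hψφ : ψ ≫ φ = 0} {hψπ : ψ ≫ π = 0}

variable (hφψ hψφ) in
/-- The complex `⋯ → P → P → P` with differentials alternately `φ` and `ψ`, where `ψ` is the one
from degree `1` to degree `0`. -/
noncomputable abbrev periodicComplex : ChainComplex C ℕ :=
  HomologicalComplex.alternatingConst P hφψ hψφ fun _ _ ↦ ComplexShape.down_nat_odd_add

theorem periodicComplex_exactAt_succ (exact_φψ : (ShortComplex.mk φ ψ hφψ).Exact)
    (exact_ψφ : (ShortComplex.mk ψ φ hψφ).Exact) (n : ℕ) :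
    (periodicComplex hφψ hψφ).ExactAt (n + 1) := by
  rw [HomologicalComplex.exactAt_iff' _ (n + 2) (n + 1) n (by simp) (by simp)]
  rcases (n + 1).even_or_odd with even | odd
  · exact (ShortComplex.exact_iff_of_iso (HomologicalComplex.alternatingConstScIsoEven P hφψ hψφ _
      rfl rfl even)).2 exact_ψφ
  · exact (ShortComplex.exact_iff_of_iso (HomologicalComplex.alternatingConstScIsoOdd P hφψ hψφ _
      rfl rfl odd)).2 exact_φψ

variable (hφψ hψφ hψπ) in
/-- The augmentation of `periodicComplex` given by a map `π : P ⟶ X` that kills `ψ`. -/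
noncomputable def periodicAugmentation :
    periodicComplex hφψ hψφ ⟶ (ChainComplex.single₀ C).obj X :=
  ((periodicComplex hφψ hψφ).toSingle₀Equiv X).symm ⟨π, hψπ⟩

theorem quasiIso_periodicAugmentation [Epi π] (exact_φψ : (ShortComplex.mk φ ψ hφψ).Exact)
    (exact_ψφ : (ShortComplex.mk ψ φ hψφ).Exact) (exact_ψπ : (ShortComplex.mk ψ π hψπ).Exact) :
    QuasiIso (periodicAugmentation hφψ hψφ hψπ) where
  quasiIsoAt
    | 0 => by
      rw [ChainComplex.quasiIsoAt₀_iff, ShortComplex.quasiIso_iff_of_zeros' _ rfl rfl rfl]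
      have augmentation_f_zero : (periodicAugmentation hφψ hψφ hψπ).f 0 = π :=
        ChainComplex.toSingle₀Equiv_symm_apply_f_zero ..
      change (ShortComplex.mk ψ (X₃ := X) ((periodicAugmentation hφψ hψφ hψπ).f 0) _).Exact ∧
        Epi (Y := X) ((periodicAugmentation hφψ hψφ hψπ).f 0)
      simp only [augmentation_f_zero]
      exact ⟨exact_ψπ, ‹Epi π›⟩
    | n + 1 => by
      rw [quasiIsoAt_iff_exactAt' (hL := ChainComplex.exactAt_succ_single_obj ..)]
      exact periodicComplex_exactAt_succ exact_φψ exact_ψφ n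

/-- The 2-periodic projective resolution of `X` given by `periodicComplex` and `π`. -/
noncomputable abbrev periodicResolution [Projective P] [Epi π]
    (exact_φψ : (ShortComplex.mk φ ψ hφψ).Exact)
    (exact_ψφ : (ShortComplex.mk ψ φ hψφ).Exact) (exact_ψπ : (ShortComplex.mk ψ π hψπ).Exact) :
    ProjectiveResolution X where
  complex := periodicComplex hφψ hψφ
  projective _ := ‹Projective P›
  π := periodicAugmentation hφψ hψφ hψπ
  quasiIso := quasiIso_periodicAugmentation exact_φψ exact_ψφ exact_ψπ

end PeriodicResolution

section Ext

theorem ofHom_comp_ofHom_eq_zero_of_exact {R : Type*} [Ring R] {M₁ M₂ M₃ : Type u}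
    [AddCommGroup M₁] [Module R M₁] [AddCommGroup M₂] [Module R M₂] [AddCommGroup M₃] [Module R M₃]
    {f : M₁ →ₗ[R] M₂} {g : M₂ →ₗ[R] M₃} (h : Function.Exact f g) :
    ModuleCat.ofHom f ≫ ModuleCat.ofHom g = 0 := by
  rw [← ModuleCat.ofHom_comp, h.linearMap_comp_eq_zero]
  rfl

/-- The homology of a short complex of modules, with the image taken in the middle term rather
than in the kernel. -/
noncomputable def homologyEquivKerQuotient {R : Type*} [Ring R] (S : ShortComplex (ModuleCat R)) :
    S.homology ≃ₗ[R] LinearMap.ker S.g.hom ⧸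
      (LinearMap.range S.f.hom).submoduleOf (LinearMap.ker S.g.hom) :=
  S.moduleCatHomologyIso.toLinearEquiv ≪≫ₗ
    Submodule.quotEquivOfEq _ _ (LinearMap.range_codRestrict ..)

variable {K A M N : Type u} [Field K] [CommRing A] [Algebra K A] [AddCommGroup M] [Module A M]
  [AddCommGroup N] [Module A N] [Module K N] [IsScalarTower K A N]

variable (K A N) in
/-- Evaluation at `1`, as a `K`-linear equivalence `Hom_A(A, N) ≃ N`. The left-hand side is written
with `linearYoneda` because its `K`-structure comes from `A` and agrees with the given one on `N`
only propositionally. -/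
noncomputable def linearYonedaRingEquiv :
    ((linearYoneda K (ModuleCat.{u} A)).obj (ModuleCat.of A N)).obj (.op (ModuleCat.of A A))
      ≃ₗ[K] N where
  toFun (f : ModuleCat.of A A ⟶ ModuleCat.of A N) := f.hom (1 : A)
  invFun x := ModuleCat.ofHom (LinearMap.toSpanSingleton A N x)
  left_inv (f : ModuleCat.of A A ⟶ ModuleCat.of A N) :=
    ModuleCat.hom_ext (LinearMap.ext_ring (one_smul A (f.hom (1 : A))))
  right_inv x := one_smul A x
  map_add' _ _ := rfl
  map_smul' c (f : ModuleCat.of A A ⟶ ModuleCat.of A N) :=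
    algebraMap_smul (M := N) A c (f.hom (1 : A))

variable {a b : A} {π : A →ₗ[A] M}
  (exact_ab : Function.Exact (LinearMap.lsmul A A a) (LinearMap.lsmul A A b))
  (exact_ba : Function.Exact (LinearMap.lsmul A A b) (LinearMap.lsmul A A a))
  (exact_aπ : Function.Exact (LinearMap.lsmul A A a) π) (surjective_π : Function.Surjective π)

/-- The free resolution `⋯ → A → A → A → M` with differentials alternately multiplication by `b` and
by `a`, the last one before the augmentation `π` being `a`. -/
noncomputable abbrev smulResolution : ProjectiveResolution (ModuleCat.of A M) :=
  have : Projective (ModuleCat.of A A) :=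
    (IsProjective.iff_projective _).1 (inferInstanceAs (Module.Projective A A))
  have : Epi (ModuleCat.ofHom π) := (ModuleCat.epi_iff_surjective _).2 surjective_π
  periodicResolution
    (ModuleCat.shortComplex_exact (.mk _ _ (ofHom_comp_ofHom_eq_zero_of_exact exact_ba)) exact_ba)
    (ModuleCat.shortComplex_exact (.mk _ _ (ofHom_comp_ofHom_eq_zero_of_exact exact_ab)) exact_ab)
    (ModuleCat.shortComplex_exact (.mk _ _ (ofHom_comp_ofHom_eq_zero_of_exact exact_aπ)) exact_aπ)

variable (K N) in
/-- Applying `Hom_A(-, N)` to `smulResolution` gives, around degree `1`, the complex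
`N → N → N` of multiplication by `a` followed by multiplication by `b`. -/
noncomputable def linearYonedaSMulResolutionIso :
    ((smulResolution exact_ab exact_ba exact_aπ surjective_π).complex.linearYonedaObj K
      (ModuleCat.of A N)).sc' 0 1 2 ≅
    ModuleCat.shortComplexOfCompEqZero _ _
      (lsmul_comp_lsmul_eq_zero_of_exact (K := K) (N := N) exact_ab) :=
  let e := (linearYonedaRingEquiv K A N).toModuleIso
  ShortComplex.isoMk e e e
    (by ext (f : ModuleCat.of A A ⟶ ModuleCat.of A N); exact (f.hom.map_smul a (1 : A)).symm)
    (by ext (f : ModuleCat.of A A ⟶ ModuleCat.of A N); exact (f.hom.map_smul b (1 : A)).symm)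

variable (K N) in
/-- The computation of `Ext¹_A(M, N)` from the 2-periodic resolution of `M`. -/
noncomputable def extOneEquivSMulHomology :
    ((Ext K (ModuleCat.{u} A) 1).obj (.op (ModuleCat.of A M))).obj (ModuleCat.of A N) ≃ₗ[K]
      SMulHomology K N a b :=
  ((smulResolution exact_ab exact_ba exact_aπ surjective_π).isoExt (R := K) 1 (ModuleCat.of A N) ≪≫
    ShortComplex.homologyMapIso (HomologicalComplex.isoSc' _ 0 1 2 (by simp) (by simp) ≪≫
      linearYonedaSMulResolutionIso K N exact_ab exact_ba exact_aπ surjective_π)).toLinearEquiv ≪≫ₗ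
    homologyEquivKerQuotient _

end Ext

namespace TruncatedPolynomialAlgebra

open Polynomial

variable (K : Type u) [Field K] (n : ℕ)

/-- The class of the variable in `K[t]/(t^n)`. -/
noncomputable abbrev root : TruncatedPolynomialAlgebra K n :=
  Ideal.Quotient.mk (Ideal.span {(X : K[X]) ^ n}) X

theorem root_pow_eq_zero : root K n ^ n = 0 := by
  rw [← map_pow, Ideal.Quotient.eq_zero_iff_mem]
  exact Ideal.mem_span_singleton_self _

theorem adjoin_root_eq_top : Algebra.adjoin K {root K n} = ⊤ := by
  have map_adjoin_X := congrArg
    (Subalgebra.map (Ideal.Quotient.mkₐ K (Ideal.span {(X : K[X]) ^ n}))) (adjoin_X (R := K))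
  rwa [AlgHom.map_adjoin, Set.image_singleton, Algebra.map_top,
    (AlgHom.range_eq_top _).2 (Ideal.Quotient.mkₐ_surjective K _)] at map_adjoin_X

variable {n} in
theorem exact_lsmul_root_pow {i j : ℕ} (hij : i + j = n) :
    Function.Exact (LinearMap.lsmul _ (TruncatedPolynomialAlgebra K n) (root K n ^ i))
      (LinearMap.lsmul _ (TruncatedPolynomialAlgebra K n) (root K n ^ j)) := by
  intro r
  constructor
  · intro hr
    obtain ⟨f, rfl⟩ := Ideal.Quotient.mk_surjective r
    have pow_dvd : (X : K[X]) ^ j * X ^ i ∣ X ^ j * f := by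
      rw [← pow_add, add_comm, hij, ← Ideal.mem_span_singleton, ← Ideal.Quotient.eq_zero_iff_mem,
        map_mul, map_pow]
      exact hr
    obtain ⟨g, rfl⟩ := (mul_dvd_mul_iff_left (pow_ne_zero j X_ne_zero)).1 pow_dvd
    exact ⟨Ideal.Quotient.mk _ g, by simp⟩
  · rintro ⟨s, rfl⟩
    simp only [LinearMap.lsmul_apply, smul_eq_mul, ← mul_assoc, ← pow_add, add_comm j i, hij,
      root_pow_eq_zero, zero_mul]

section ResidueField

variable {K n} [Module (TruncatedPolynomialAlgebra K n) K]
  [IsScalarTower K (TruncatedPolynomialAlgebra K n) K]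

theorem toSpanSingleton_one_algebraMap (c : K) :
    LinearMap.toSpanSingleton (TruncatedPolynomialAlgebra K n) K 1 (algebraMap K _ c) = c := by
  rw [LinearMap.toSpanSingleton_apply, algebraMap_smul, smul_eq_mul, mul_one]

theorem surjective_toSpanSingleton_one :
    Function.Surjective (LinearMap.toSpanSingleton (TruncatedPolynomialAlgebra K n) K 1) :=
  fun c ↦ ⟨_, toSpanSingleton_one_algebraMap c⟩

theorem exact_lsmul_root_toSpanSingleton_one (ht : ∀ x : K, root K n • x = 0) :
    Function.Exact (LinearMap.lsmul _ _ (root K n))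
      (LinearMap.toSpanSingleton (TruncatedPolynomialAlgebra K n) K 1) := by
  have toSpanSingleton_root_smul (s : TruncatedPolynomialAlgebra K n) :
      LinearMap.toSpanSingleton (TruncatedPolynomialAlgebra K n) K 1 (root K n • s) = 0 := by
    rw [map_smul, ht]
  intro r
  constructor
  · intro hr
    obtain ⟨f, rfl⟩ := Ideal.Quotient.mk_surjective r
    have mk_eq : Ideal.Quotient.mk (Ideal.span {(X : K[X]) ^ n}) f =
        root K n • Ideal.Quotient.mk _ f.divX + algebraMap K _ (f.coeff 0) := by
      conv_lhs => rw [← X_mul_divX_add f, map_add, map_mul]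
      rfl
    have coeff_eq_zero : f.coeff 0 = 0 := by
      rwa [mk_eq, map_add, toSpanSingleton_root_smul, zero_add,
        toSpanSingleton_one_algebraMap] at hr
    exact ⟨Ideal.Quotient.mk _ f.divX, by simp [mk_eq, coeff_eq_zero]⟩
  · rintro ⟨s, rfl⟩
    exact toSpanSingleton_root_smul s

end ResidueField

end TruncatedPolynomialAlgebra

theorem stablyFiniteDimensional_iff_ext_finite_general
    (K : Type u) [Field K] (n : ℕ)
    [Module (TruncatedPolynomialAlgebra K n) K]
    [IsScalarTower K (TruncatedPolynomialAlgebra K n) K]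
    (ht : ∀ x : K,
      (Ideal.Quotient.mk (Ideal.span {(Polynomial.X : Polynomial K) ^ n})
        Polynomial.X) • x = 0)
    (N : Type u) [AddCommGroup N] [Module (TruncatedPolynomialAlgebra K n) N]
    [Module K N] [IsScalarTower K (TruncatedPolynomialAlgebra K n) N] :
    (∃ D F : Submodule (TruncatedPolynomialAlgebra K n) N,
        IsCompl D F ∧ Module.Finite K ↥D ∧
          Module.Free (TruncatedPolynomialAlgebra K n) ↥F) ↔
      Module.Finite K
        ↥(((Ext K (ModuleCat.{u} (TruncatedPolynomialAlgebra K n)) 1).obj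
            (Opposite.op (ModuleCat.of (TruncatedPolynomialAlgebra K n) K))).obj
          (ModuleCat.of (TruncatedPolynomialAlgebra K n) N)) := by
  obtain _ | q := n
  · have : Subsingleton (TruncatedPolynomialAlgebra K 0) :=
      Ideal.Quotient.subsingleton_iff.2 (by simp)
    have := Module.subsingleton (TruncatedPolynomialAlgebra K 0) K
    exact (not_subsingleton K this).elim
  have exact_t_pow := TruncatedPolynomialAlgebra.exact_lsmul_root_pow K (add_comm 1 q)
  have exact_pow_t := TruncatedPolynomialAlgebra.exact_lsmul_root_pow K (rfl : q + 1 = q + 1)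
  rw [pow_one] at exact_t_pow exact_pow_t
  rw [Module.Finite.equiv_iff (extOneEquivSMulHomology K N exact_t_pow exact_pow_t
    (TruncatedPolynomialAlgebra.exact_lsmul_root_toSpanSingleton_one ht)
    TruncatedPolynomialAlgebra.surjective_toSpanSingleton_one)]
  exact exists_isCompl_finite_free_iff_finite_smulHomology
    (TruncatedPolynomialAlgebra.adjoin_root_eq_top K (q + 1))
    (TruncatedPolynomialAlgebra.root_pow_eq_zero K (q + 1)) exact_t_pow

/-- Let `K` be a field of characteristic `p > 0` and `A = K[t]/(t^p)`, with `K` regarded as the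
`A`-module `A/(t)` (i.e. the `A`-module structure on `K` is `K`-linear and `t` acts as zero).
An `A`-module `N` is isomorphic to a direct sum `D ⊕ F` with `D` a finite-dimensional `K`-vector
space and `F` a free `A`-module, if and only if `Ext¹_A(K, N)` is a finite-dimensional
`K`-vector space. -/
theorem stablyFiniteDimensional_iff_ext_finite
    (K : Type u) [Field K] (p : ℕ) [Fact p.Prime] [CharP K p]
    [Module (TruncatedPolynomialAlgebra K p) K]
    [IsScalarTower K (TruncatedPolynomialAlgebra K p) K]
    (ht : ∀ x : K,
      (Ideal.Quotient.mk (Ideal.span {(Polynomial.X : Polynomial K) ^ p})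
        Polynomial.X) • x = 0)
    (N : Type u) [AddCommGroup N] [Module (TruncatedPolynomialAlgebra K p) N]
    [Module K N] [IsScalarTower K (TruncatedPolynomialAlgebra K p) N] :
    (∃ D F : Submodule (TruncatedPolynomialAlgebra K p) N,
        IsCompl D F ∧ Module.Finite K ↥D ∧
          Module.Free (TruncatedPolynomialAlgebra K p) ↥F) ↔
      Module.Finite K
        ↥(((Ext K (ModuleCat.{u} (TruncatedPolynomialAlgebra K p)) 1).obj
            (Opposite.op (ModuleCat.of (TruncatedPolynomialAlgebra K p) K))).obj
          (ModuleCat.of (TruncatedPolynomialAlgebra K p) N)) :=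
  stablyFiniteDimensional_iff_ext_finite_general K p ht N
end
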